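/- arXiv:2007.01894 — 3 statements merged into one kernel-verified Lean document; each statement's English description precedes it below -/
import Mathlib

section
/- The integral ∫_0^∞ t ln(1 - e^{-t}) / (e^{-t} - 1) dt equals 2ζ(3), where ζ is the Riemann zeta function. -/
/-!
Write `φ t = -log (1 - e⁻ᵗ)`. The relation `e⁻ᵗ + e^(-φ t) = 1` is symmetric in `t` and `φ t`, so
`φ` is an involution of `(0, ∞)`, and `-φ' t = (1 - e⁻ᵗ)⁻¹ - 1`. Hence for a `φ`-invariant `g` the
weight `(1 - e⁻ᵗ)⁻¹ = 1 + |φ' t|` doubles the integral of `g`. The integrand here is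
`(1 - e⁻ᵗ)⁻¹ (t * φ t)`, and `t * φ t` is `φ`-invariant; integrating `φ t = ∑ₙ e⁻ⁿᵗ / n` against `t`
termwise gives `ζ(3)`.
-/

open MeasureTheory

/-- The Riemann zeta value at integer `s ≥ 2`, `ζ(s) = ∑_{n=1}^∞ 1/n^s`. -/
noncomputable def zetaVal (s : ℕ) : ℝ := ∑' n : ℕ, 1 / ((n + 1 : ℝ)) ^ s

open Set

theorem ofReal_zetaVal {k : ℕ} (hk : 1 < k) : (zetaVal k : ℂ) = riemannZeta k := by
  rw [zeta_eq_tsum_one_div_nat_add_one_cpow (by simpa using hk), zetaVal]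
  push_cast
  simp only [Complex.cpow_natCast]

theorem zetaVal_ne_zero {k : ℕ} (hk : 1 < k) : zetaVal k ≠ 0 := by
  rw [← Complex.ofReal_ne_zero, ofReal_zetaVal hk]
  exact riemannZeta_ne_zero_of_one_lt_re (by simpa using hk)

theorem one_sub_exp_neg_pos {t : ℝ} (ht : 0 < t) : 0 < 1 - Real.exp (-t) := by
  simpa using ht

/-- The involution `t ↦ -log (1 - e⁻ᵗ)` of `(0, ∞)`, which is also `Li₁(e⁻ᵗ)`; its values at
`t ≤ 0` carry no meaning. -/
noncomputable def logInvolution (t : ℝ) : ℝ := -Real.log (1 - Real.exp (-t))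

section Involution

theorem exp_neg_logInvolution {t : ℝ} (ht : 0 < t) :
    Real.exp (-logInvolution t) = 1 - Real.exp (-t) := by
  rw [logInvolution, neg_neg, Real.exp_log (one_sub_exp_neg_pos ht)]

theorem logInvolution_pos {t : ℝ} (ht : 0 < t) : 0 < logInvolution t :=
  neg_pos.2 <| Real.log_neg (one_sub_exp_neg_pos ht) (sub_lt_self 1 (Real.exp_pos _))

theorem logInvolution_logInvolution {t : ℝ} (ht : 0 < t) :
    logInvolution (logInvolution t) = t := by
  rw [logInvolution, exp_neg_logInvolution ht, sub_sub_cancel, Real.log_exp, neg_neg]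

theorem bijOn_logInvolution : BijOn logInvolution (Ioi 0) (Ioi 0) :=
  InvOn.bijOn ⟨fun _ ht ↦ logInvolution_logInvolution ht, fun _ ht ↦ logInvolution_logInvolution ht⟩
    (fun _ ht ↦ logInvolution_pos ht) (fun _ ht ↦ logInvolution_pos ht)

theorem hasDerivAt_logInvolution {t : ℝ} (ht : 0 < t) :
    HasDerivAt logInvolution (1 - (1 - Real.exp (-t))⁻¹) t := by
  have hpos := one_sub_exp_neg_pos ht
  have hinner : HasDerivAt (fun u ↦ 1 - Real.exp (-u)) (Real.exp (-t)) t := by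
    simpa using (hasDerivAt_neg t).exp.const_sub 1
  refine (hinner.log hpos.ne').neg.congr_deriv ?_
  field_simp
  ring

theorem abs_deriv_logInvolution {t : ℝ} (ht : 0 < t) :
    |1 - (1 - Real.exp (-t))⁻¹| = (1 - Real.exp (-t))⁻¹ - 1 := by
  have hle : 1 ≤ (1 - Real.exp (-t))⁻¹ :=
    (one_le_inv₀ (one_sub_exp_neg_pos ht)).2 (sub_le_self 1 (Real.exp_pos _).le)
  rw [abs_sub_comm, abs_of_nonneg (sub_nonneg.2 hle)]

variable {E : Type*} [NormedAddCommGroup E] [NormedSpace ℝ E] {g : ℝ → E}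

theorem setIntegral_abs_deriv_smul_comp_logInvolution (g : ℝ → E) :
    ∫ t in Ioi 0, |1 - (1 - Real.exp (-t))⁻¹| • g (logInvolution t) = ∫ t in Ioi 0, g t := by
  rw [← integral_image_eq_integral_abs_deriv_smul measurableSet_Ioi
    (fun t ht ↦ (hasDerivAt_logInvolution ht).hasDerivWithinAt) bijOn_logInvolution.injOn,
    bijOn_logInvolution.image_eq]

theorem integrableOn_abs_deriv_smul_comp_logInvolution_iff :
    IntegrableOn (fun t ↦ |1 - (1 - Real.exp (-t))⁻¹| • g (logInvolution t)) (Ioi 0) ↔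
      IntegrableOn g (Ioi 0) := by
  rw [← integrableOn_image_iff_integrableOn_abs_deriv_smul measurableSet_Ioi
    (fun t ht ↦ (hasDerivAt_logInvolution ht).hasDerivWithinAt) bijOn_logInvolution.injOn,
    bijOn_logInvolution.image_eq]

theorem setIntegral_inv_one_sub_exp_neg_smul_of_comp_logInvolution_eq
    (hg : IntegrableOn g (Ioi 0)) (hinv : EqOn (g ∘ logInvolution) g (Ioi 0)) :
    ∫ t in Ioi 0, (1 - Real.exp (-t))⁻¹ • g t = (2 : ℝ) • ∫ t in Ioi 0, g t := by
  have hsplit : EqOn (fun t ↦ (1 - Real.exp (-t))⁻¹ • g t)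
      (fun t ↦ g t + |1 - (1 - Real.exp (-t))⁻¹| • g (logInvolution t)) (Ioi 0) := by
    intro t ht
    have hgt : g (logInvolution t) = g t := hinv ht
    simp only [hgt, abs_deriv_logInvolution ht, sub_smul, one_smul, add_sub_cancel]
  rw [setIntegral_congr_fun measurableSet_Ioi hsplit,
    integral_add hg (integrableOn_abs_deriv_smul_comp_logInvolution_iff.2 hg),
    setIntegral_abs_deriv_smul_comp_logInvolution, two_smul]

end Involution

section Mellin

theorem mellin_ofReal_natCast_add_one (f : ℝ → ℝ) (k : ℕ) :
    mellin (fun t ↦ (f t : ℂ)) (k + 1) = (∫ t in Ioi 0, t ^ k * f t : ℝ) := by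
  rw [← integral_complex_ofReal]
  simp only [mellin, add_sub_cancel_right, Complex.cpow_natCast, smul_eq_mul, Complex.ofReal_mul,
    Complex.ofReal_pow]

theorem hasSum_logInvolution {t : ℝ} (ht : 0 < t) :
    HasSum (fun n : ℕ ↦ (n + 1 : ℝ)⁻¹ * Real.exp (-(n + 1) * t)) (logInvolution t) := by
  have hlt : |Real.exp (-t)| < 1 := by
    rw [Real.abs_exp]
    exact sub_pos.1 (one_sub_exp_neg_pos ht)
  refine (Real.hasSum_pow_div_log_of_abs_lt_one hlt).congr_fun fun n ↦ ?_
  rw [← Real.exp_nat_mul, div_eq_inv_mul]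
  push_cast
  ring_nf

theorem mellin_logInvolution {s : ℂ} (hs : 0 < s.re) :
    mellin (fun t ↦ (logInvolution t : ℂ)) s = Complex.Gamma s * riemannZeta (s + 1) := by
  have hsum : HasSum (fun n : ℕ ↦ Complex.Gamma s * ((n + 1 : ℝ)⁻¹ : ℝ) / ((n + 1 : ℝ) : ℂ) ^ s)
      (mellin (fun t ↦ (logInvolution t : ℂ)) s) := by
    refine hasSum_mellin (fun n ↦ .inr n.cast_add_one_pos) hs
      (fun t ht ↦ mod_cast hasSum_logInvolution ht) ?_
    have hzeta : Summable fun n : ℕ ↦ 1 / ((n + 1 : ℕ) : ℝ) ^ (s.re + 1) :=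
      (summable_nat_add_iff 1).2 (Real.summable_one_div_nat_rpow.2 (by linarith))
    refine hzeta.congr fun n ↦ ?_
    have hn : (0 : ℝ) < n + 1 := n.cast_add_one_pos
    rw [Complex.norm_real, Real.norm_of_nonneg (by positivity), Nat.cast_succ,
      Real.rpow_add_one hn.ne']
    field_simp
  rw [← hsum.tsum_eq, zeta_eq_tsum_one_div_nat_add_one_cpow (by simpa using hs), ← tsum_mul_left]
  refine tsum_congr fun n ↦ ?_
  have hn : (n + 1 : ℂ) ≠ 0 := n.cast_add_one_ne_zero
  rw [Complex.cpow_add _ _ hn, Complex.cpow_one]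
  push_cast
  field_simp

theorem setIntegral_pow_mul_logInvolution (k : ℕ) :
    ∫ t in Ioi 0, t ^ k * logInvolution t = k.factorial * zetaVal (k + 2) := by
  have hre : 0 < (k + 1 : ℂ).re := by
    rw [Complex.add_re, Complex.natCast_re, Complex.one_re]
    positivity
  have hmellin := mellin_logInvolution hre
  have hshift : (k + 1 + 1 : ℂ) = (k + 2 : ℕ) := by push_cast; ring
  rw [mellin_ofReal_natCast_add_one, Complex.Gamma_nat_eq_factorial, hshift,
    ← ofReal_zetaVal (by lia)] at hmellin
  exact_mod_cast hmellin

-- A divergent Bochner integral is `0` by convention, so a nonzero value certifies convergence.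
theorem integrableOn_pow_mul_logInvolution (k : ℕ) :
    IntegrableOn (fun t ↦ t ^ k * logInvolution t) (Ioi 0) := by
  refine Integrable.of_integral_ne_zero ((setIntegral_pow_mul_logInvolution k).trans_ne ?_)
  exact mul_ne_zero (mod_cast k.factorial_ne_zero) (zetaVal_ne_zero (by lia))

end Mellin

theorem integral_example_one :
    (∫ t in Set.Ioi (0 : ℝ),
      t * Real.log (1 - Real.exp (-t)) / (Real.exp (-t) - 1)) = 2 * zetaVal 3 := by
  have hinv : EqOn ((fun t ↦ t * logInvolution t) ∘ logInvolution)
      (fun t ↦ t * logInvolution t) (Ioi 0) := fun t ht ↦ by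
    simp only [Function.comp_apply, logInvolution_logInvolution ht, mul_comm]
  have hint : IntegrableOn (fun t ↦ t * logInvolution t) (Ioi 0) := by
    simpa only [pow_one] using integrableOn_pow_mul_logInvolution 1
  calc
    _ = ∫ t in Ioi 0, (1 - Real.exp (-t))⁻¹ • (t * logInvolution t) := by
      refine integral_congr_ae (.of_forall fun t ↦ ?_)
      simp only [logInvolution, smul_eq_mul]
      rw [← neg_sub 1 (Real.exp (-t)), div_neg]
      ring
    _ = 2 * ∫ t in Ioi 0, t * logInvolution t :=
      setIntegral_inv_one_sub_exp_neg_smul_of_comp_logInvolution_eq hint hinv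
    _ = 2 * zetaVal 3 := by
      congrm 2 * ?_
      simpa using setIntegral_pow_mul_logInvolution 1
end

section
/- The integral ∫_0^∞ t^2 ln(1 - e^{-t}) / (e^{-t} - 1)^2 dt equals 2ζ(2) − 4ζ(3) − (5/2)ζ(4), where ζ is the Riemann zeta function. -/
open MeasureTheory

/-!
Expanding `-log (1 - x) / (1 - x) ^ 2 = ∑ ((n + 1) Hₙ - n) xⁿ` at `x = e⁻ᵗ`, with `Hₙ` the harmonic
numbers, and integrating term by term against `t ^ 2` turns the integral into
`-2 (∑ Hₙ / n² + ∑ Hₙ / n³ - ζ(2))`. The two Euler sums come from the Tornheim series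
`T(a, b, c) = ∑ 1 / (mᵃ nᵇ (m + n)ᶜ)`: summing over `n` gives `T(a, 1, 1) = ∑ Hₘ / mᵃ⁺¹`, while the
partial fraction `1 / (m n) = (1 / m + 1 / n) / (m + n)` and symmetry give
`T(2, 1, 1) = T(2, 2, 0) / 2 = ζ(2)² / 2` and `T(1, 0, 2) = T(1, 1, 1) / 2`. Summing the last series
along the lines `m + n = N` gives `T(1, 0, 2) = T(1, 1, 1) - ζ(3)`, whence `T(1, 1, 1) = 2 ζ(3)`.
-/

section Series

open Filter Finset Topology

lemma hasSum_sum_antidiagonal {A M : Type*} [AddCommMonoid A] [HasAntidiagonal A]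
    [AddCommMonoid M] [TopologicalSpace M] [ContinuousAdd M] [RegularSpace M]
    {f : A × A → M} {s : M} (hf : HasSum f s) :
    HasSum (fun n ↦ ∑ p ∈ antidiagonal n, f p) s := by
  have h := (HasAntidiagonal.sigmaAntidiagonalEquivProd (A := A)).hasSum_iff.2 hf
  refine h.sigma fun n ↦ ?_
  rw [← sum_coe_sort]
  exact hasSum_fintype fun p : antidiagonal n ↦ f p

lemma hasSum_sub_add_of_antitone {f : ℕ → ℝ} (hf : Antitone f) (hlim : Tendsto f atTop (𝓝 0))
    (N : ℕ) : HasSum (fun k ↦ f k - f (k + N)) (∑ i ∈ range N, f i) := by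
  rw [hasSum_iff_tendsto_nat_of_nonneg fun k ↦ sub_nonneg.2 (hf (Nat.le_add_right k N))]
  have partial_sum (n : ℕ) : ∑ k ∈ range n, (f k - f (k + N)) =
      ∑ i ∈ range N, f i - ∑ i ∈ range N, f (n + i) := by
    have h := sum_range_add f N n
    rw [add_comm N n, sum_range_add] at h
    simp only [sum_sub_distrib, add_comm _ N]
    linarith
  have tail : Tendsto (fun n ↦ ∑ i ∈ range N, f (n + i)) atTop (𝓝 0) := by
    simpa only [sum_const_zero] using tendsto_finsetSum (range N) fun i _ ↦
      (tendsto_add_atTop_iff_nat i).2 hlim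
  simpa only [partial_sum, sub_zero] using tail.const_sub (∑ i ∈ range N, f i)

lemma hasSum_sum_range_mul_pow {𝕜 : Type*} [RCLike 𝕜] {a : ℕ → 𝕜} {x s : 𝕜} (hx : ‖x‖ < 1)
    (ha : HasSum (fun n ↦ a n * x ^ n) s) :
    HasSum (fun n ↦ (∑ i ∈ range (n + 1), a i) * x ^ n) (s / (1 - x)) := by
  have h := hasSum_sum_range_mul_of_summable_norm ha.summable.norm
    (summable_geometric_of_norm_lt_one hx).norm
  rw [ha.tsum_eq, tsum_geometric_of_norm_lt_one hx, ← div_eq_mul_inv] at h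
  convert! h using 2 with n
  rw [sum_mul]
  refine sum_congr rfl fun i hi ↦ ?_
  rw [mul_assoc, ← pow_add, Nat.add_sub_cancel' (mem_range_succ_iff.1 hi)]

end Series

section Harmonic

open Filter Finset Topology

lemma sum_range_succ_harmonic (n : ℕ) :
    ∑ i ∈ range (n + 1), harmonic i = (n + 1) * harmonic n - n := by
  induction n with
  | zero => simp
  | succ n ih =>
    rw [sum_range_succ, ih, harmonic_succ]
    push_cast
    field_simp
    ring

lemma cast_harmonic_eq_sum (n : ℕ) : (harmonic n : ℝ) = ∑ i ∈ range n, 1 / ((i : ℝ) + 1) := by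
  simp [harmonic]

lemma hasSum_one_div_mul_add {n : ℕ} (hn : n ≠ 0) :
    HasSum (fun k : ℕ ↦ 1 / (((k : ℝ) + 1) * (k + 1 + n))) (harmonic n / n) := by
  have anti : Antitone fun k : ℕ ↦ 1 / ((k : ℝ) + 1) := fun i j hij ↦ by dsimp only; gcongr
  have h := (hasSum_sub_add_of_antitone anti tendsto_one_div_add_atTop_nhds_zero_nat n).div_const
    (n : ℝ)
  rw [← cast_harmonic_eq_sum] at h
  convert! h using 2 with k
  push_cast
  field_simp
  ring

lemma hasSum_harmonic_mul_pow {x : ℝ} (hx : |x| < 1) :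
    HasSum (fun n : ℕ ↦ (harmonic n : ℝ) * x ^ n) (-Real.log (1 - x) / (1 - x)) := by
  have hlog : HasSum (fun n : ℕ ↦ (n : ℝ)⁻¹ * x ^ n) (-Real.log (1 - x)) := by
    simpa [div_eq_inv_mul] using (hasSum_nat_add_iff (f := fun n : ℕ ↦ (n : ℝ)⁻¹ * x ^ n) 1).1 (by
      simpa [div_eq_inv_mul] using Real.hasSum_pow_div_log_of_abs_lt_one hx)
  convert! hasSum_sum_range_mul_pow hx hlog using 3 with n
  simp [harmonic, sum_range_succ']

lemma hasSum_neg_log_div_sq {x : ℝ} (hx : |x| < 1) :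
    HasSum (fun n : ℕ ↦ (((n : ℝ) + 1) * harmonic n - n) * x ^ n)
      (-Real.log (1 - x) / (1 - x) ^ 2) := by
  convert! hasSum_sum_range_mul_pow hx (hasSum_harmonic_mul_pow hx) using 1
  · ext n
    exact_mod_cast congrArg (fun q : ℚ ↦ (q : ℝ) * x ^ n) (sum_range_succ_harmonic n).symm
  · rw [div_div, sq]

end Harmonic

section Zeta

lemma hasSum_zetaVal {s : ℕ} (hs : 2 ≤ s) :
    HasSum (fun n : ℕ ↦ 1 / ((n : ℝ) + 1) ^ s) (zetaVal s) := by
  refine Summable.hasSum ?_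
  exact_mod_cast (summable_nat_add_iff 1).2 (Real.summable_one_div_nat_pow.2 hs)

-- As `1 / 0 = 0`, the term at `n = 0` contributes nothing.
lemma hasSum_one_div_pow_zetaVal {s : ℕ} (hs : 2 ≤ s) :
    HasSum (fun n : ℕ ↦ 1 / (n : ℝ) ^ s) (zetaVal s) := by
  have h := (hasSum_nat_add_iff (f := fun n : ℕ ↦ 1 / (n : ℝ) ^ s) 1).1
    (by exact_mod_cast hasSum_zetaVal hs)
  simpa [show s ≠ 0 by lia] using h

lemma zetaVal_two_sq : zetaVal 2 ^ 2 = 5 / 2 * zetaVal 4 := by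
  rw [(hasSum_one_div_pow_zetaVal le_rfl).unique hasSum_zeta_two,
    (hasSum_one_div_pow_zetaVal (by norm_num)).unique hasSum_zeta_four]
  ring

end Zeta

section Tornheim

open Finset

/-- The term `1 / (mᵃ nᵇ (m + n)ᶜ)` of the Tornheim double series `T(a, b, c)`, where the positive
integers `m` and `n` are `p.1 + 1` and `p.2 + 1`. -/
noncomputable def tornheimTerm (a b c : ℕ) (p : ℕ × ℕ) : ℝ :=
  1 / (((p.1 : ℝ) + 1) ^ a * ((p.2 : ℝ) + 1) ^ b * ((p.1 : ℝ) + 1 + (p.2 + 1)) ^ c)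

lemma tornheimTerm_nonneg (a b c : ℕ) (p : ℕ × ℕ) : 0 ≤ tornheimTerm a b c p := by
  unfold tornheimTerm
  positivity

lemma tornheimTerm_swap (a b c : ℕ) (p : ℕ × ℕ) :
    tornheimTerm a b c p.swap = tornheimTerm b a c p := by
  simp only [tornheimTerm, Prod.fst_swap, Prod.snd_swap]
  ring_nf

lemma tornheimTerm_add_tornheimTerm (a b c : ℕ) (p : ℕ × ℕ) :
    tornheimTerm (a + 1) b (c + 1) p + tornheimTerm a (b + 1) (c + 1) p =
      tornheimTerm (a + 1) (b + 1) c p := by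
  unfold tornheimTerm
  field_simp
  ring

lemma hasSum_tornheimTerm_half {a c : ℕ} {S : ℝ}
    (h : HasSum (tornheimTerm (a + 1) (a + 1) c) S) :
    HasSum (tornheimTerm (a + 1) a (c + 1)) (S / 2) := by
  have le (p : ℕ × ℕ) : tornheimTerm (a + 1) a (c + 1) p ≤ tornheimTerm (a + 1) (a + 1) c p := by
    rw [← tornheimTerm_add_tornheimTerm]
    exact le_add_of_nonneg_right (tornheimTerm_nonneg ..)
  obtain ⟨U, hU⟩ := h.summable.of_nonneg_of_le (tornheimTerm_nonneg _ _ _) le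
  have hswap : HasSum (tornheimTerm a (a + 1) (c + 1)) U := by
    simpa only [Function.comp_def, Equiv.prodComm_apply, tornheimTerm_swap] using
      (Equiv.prodComm ℕ ℕ).hasSum_iff.2 hU
  have hdouble : U + U = S :=
    (hU.add hswap).unique (by simpa only [tornheimTerm_add_tornheimTerm] using h)
  rwa [← hdouble, add_self_div_two]

lemma hasSum_tornheimTerm_zetaVal_mul_zetaVal {a b : ℕ} (ha : 2 ≤ a) (hb : 2 ≤ b) :
    HasSum (tornheimTerm a b 0) (zetaVal a * zetaVal b) := by
  have hζa := hasSum_zetaVal ha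
  have hζb := hasSum_zetaVal hb
  have hprod := hζa.summable.mul_of_nonneg hζb.summable
    (fun _ ↦ by positivity) fun _ ↦ by positivity
  convert! hζa.mul hζb hprod using 2 with p
  rw [tornheimTerm, pow_zero, mul_one, one_div_mul_one_div]

lemma summable_one_div_mul_sqrt :
    Summable fun n : ℕ ↦ 1 / (((n : ℝ) + 1) * √((n : ℝ) + 1)) := by
  have h := (summable_nat_add_iff 1).2
    (Real.summable_one_div_nat_rpow.2 (show (1 : ℝ) < 1 + 1 / 2 by norm_num))
  refine h.congr fun n ↦ ?_
  rw [Real.rpow_add (by positivity), Real.rpow_one, ← Real.sqrt_eq_rpow, Nat.cast_add_one]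

-- By AM-GM, `m + n` dominates `√m √n`, so the series is dominated by the square of `ζ(3/2)`.
lemma summable_tornheimTerm_one_one_one : Summable (tornheimTerm 1 1 1) := by
  have h := summable_one_div_mul_sqrt
  refine (h.mul_of_nonneg h (fun _ ↦ by positivity) fun _ ↦ by positivity).of_nonneg_of_le
    (tornheimTerm_nonneg 1 1 1) fun p ↦ ?_
  have am_gm : √((p.1 : ℝ) + 1) * √((p.2 : ℝ) + 1) ≤ p.1 + 1 + (p.2 + 1) := by
    rw [← Real.sqrt_mul (by positivity)]
    exact Real.sqrt_le_iff.2 ⟨by positivity, by nlinarith⟩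
  calc tornheimTerm 1 1 1 p
      = 1 / (((p.1 : ℝ) + 1) * (p.2 + 1) * (p.1 + 1 + (p.2 + 1))) := by simp [tornheimTerm]
    _ ≤ 1 / (((p.1 : ℝ) + 1) * (p.2 + 1) * (√((p.1 : ℝ) + 1) * √((p.2 : ℝ) + 1))) := by gcongr
    _ = 1 / (((p.1 : ℝ) + 1) * √((p.1 : ℝ) + 1)) * (1 / (((p.2 : ℝ) + 1) * √((p.2 : ℝ) + 1))) := by
      rw [one_div_mul_one_div, mul_mul_mul_comm]

lemma hasSum_harmonic_div_pow_of_tornheimTerm {a : ℕ} {S : ℝ}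
    (h : HasSum (tornheimTerm a 1 1) S) :
    HasSum (fun n : ℕ ↦ (harmonic n : ℝ) / n ^ (a + 1)) S := by
  have hrows : HasSum (fun n : ℕ ↦ (harmonic (n + 1) : ℝ) / ((n + 1 : ℕ) : ℝ) ^ (a + 1)) S := by
    refine h.prod_fiberwise fun n ↦ ?_
    convert! (hasSum_one_div_mul_add n.succ_ne_zero).div_const (((n + 1 : ℕ) : ℝ) ^ a) using 1
    · ext k
      simp only [tornheimTerm]
      push_cast
      field_simp
      ring
    · rw [div_div, pow_succ']
  simpa using (hasSum_nat_add_iff (f := fun n : ℕ ↦ (harmonic n : ℝ) / n ^ (a + 1)) 1).1 hrows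

lemma hasSum_harmonic_div_succ_pow_of_tornheimTerm {c : ℕ} {S : ℝ}
    (h : HasSum (tornheimTerm 1 0 c) S) :
    HasSum (fun n : ℕ ↦ (harmonic n : ℝ) / (n + 1) ^ c) S := by
  have hdiag (n : ℕ) : ∑ p ∈ antidiagonal n, tornheimTerm 1 0 c p =
      (harmonic (n + 1) : ℝ) / ((n + 1 : ℕ) + 1) ^ c := by
    rw [cast_harmonic_eq_sum, sum_div, ← Nat.sum_antidiagonal_eq_sum_range_succ
      (fun i _ : ℕ ↦ 1 / ((i : ℝ) + 1) / ((n + 1 : ℕ) + 1) ^ c)]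
    refine sum_congr rfl fun p hp ↦ ?_
    rw [← mem_antidiagonal.1 hp, tornheimTerm]
    push_cast
    field_simp
    ring
  have hshift := hasSum_sum_antidiagonal h
  simp only [hdiag] at hshift
  simpa using (hasSum_nat_add_iff (f := fun n : ℕ ↦ (harmonic n : ℝ) / (n + 1) ^ c) 1).1
    hshift

end Tornheim

section EulerSums

theorem hasSum_harmonic_div_sq :
    HasSum (fun n : ℕ ↦ (harmonic n : ℝ) / n ^ 2) (2 * zetaVal 3) := by
  obtain ⟨S, hS⟩ := summable_tornheimTerm_one_one_one
  have hrows : HasSum (fun n : ℕ ↦ (harmonic n : ℝ) / n ^ 2) S :=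
    hasSum_harmonic_div_pow_of_tornheimTerm hS
  have hdiag : HasSum (fun n : ℕ ↦ (harmonic n : ℝ) / (n + 1) ^ 2) (S / 2) :=
    hasSum_harmonic_div_succ_pow_of_tornheimTerm (hasSum_tornheimTerm_half hS)
  have hshift : HasSum (fun n : ℕ ↦ (harmonic n : ℝ) / (n + 1) ^ 2) (S - zetaVal 3) := by
    have h := ((hasSum_nat_add_iff' 1).2 hrows).sub (hasSum_zetaVal (s := 3) (by norm_num))
    convert! h using 1
    · ext n
      rw [harmonic_succ]
      push_cast
      field_simp
      ring
    · simp
  have hS_eq : S = 2 * zetaVal 3 := by linarith [hdiag.unique hshift]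
  rwa [← hS_eq]

theorem hasSum_harmonic_div_cube :
    HasSum (fun n : ℕ ↦ (harmonic n : ℝ) / n ^ 3) (zetaVal 2 ^ 2 / 2) := by
  rw [sq]
  exact hasSum_harmonic_div_pow_of_tornheimTerm
    (hasSum_tornheimTerm_half (hasSum_tornheimTerm_zetaVal_mul_zetaVal le_rfl le_rfl))

lemma hasSum_harmonic_coeff_div_cube :
    HasSum (fun n : ℕ ↦ (((n : ℝ) + 1) * harmonic n - n) / n ^ 3)
      (2 * zetaVal 3 + zetaVal 2 ^ 2 / 2 - zetaVal 2) := by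
  convert! (hasSum_harmonic_div_sq.add hasSum_harmonic_div_cube).sub
    (hasSum_one_div_pow_zetaVal le_rfl) using 2 with n
  rcases eq_or_ne n 0 with rfl | hn
  · simp
  · field_simp

end EulerSums

section Mellin

lemma hasSum_integral_rpow_mul {ι : Type*} [Countable ι] {a p : ι → ℝ} {F : ℝ → ℝ} {s : ℝ}
    (hp : ∀ i, a i = 0 ∨ 0 < p i) (hs : 0 < s)
    (hF : ∀ t ∈ Set.Ioi 0, HasSum (fun i ↦ a i * Real.exp (-p i * t)) (F t))
    (hsum : Summable fun i ↦ |a i| / p i ^ s) :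
    HasSum (fun i ↦ Real.Gamma s * a i / p i ^ s) (∫ t in Set.Ioi 0, t ^ (s - 1) * F t) := by
  have h := hasSum_mellin (a := fun i ↦ (a i : ℂ)) (F := fun t ↦ (F t : ℂ)) (s := (s : ℂ))
    (by simpa using hp) (by simpa using hs) (fun t ht ↦ by exact_mod_cast hF t ht)
    (by simpa using hsum)
  have hmellin : mellin (fun t ↦ (F t : ℂ)) s =
      ((∫ t in Set.Ioi 0, t ^ (s - 1) * F t : ℝ) : ℂ) := by
    rw [mellin, ← integral_complex_ofReal]
    refine setIntegral_congr_fun measurableSet_Ioi fun t ht ↦ ?_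
    simp only [smul_eq_mul, Complex.ofReal_mul, Complex.ofReal_cpow (Set.mem_Ioi.1 ht).le,
      Complex.ofReal_sub, Complex.ofReal_one]
  rw [hmellin] at h
  rw [← Complex.hasSum_ofReal]
  convert! h using 2 with i
  rcases hp i with hi | hi
  · simp [hi]
  · push_cast [Complex.Gamma_ofReal, Complex.ofReal_cpow hi.le]
    rfl

lemma hasSum_integral_pow_mul_comp_exp_neg {a : ℕ → ℝ} {f : ℝ → ℝ} (k : ℕ) (ha : a 0 = 0)
    (hf : ∀ x ∈ Set.Ioo 0 1, HasSum (fun n ↦ a n * x ^ n) (f x))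
    (hsum : Summable fun n : ℕ ↦ a n / n ^ (k + 1)) :
    HasSum (fun n : ℕ ↦ (k.factorial : ℝ) * (a n / n ^ (k + 1)))
      (∫ t in Set.Ioi 0, t ^ k * f (Real.exp (-t))) := by
  have hp (n : ℕ) : a n = 0 ∨ (0 : ℝ) < n := by
    rcases n.eq_zero_or_pos with rfl | hn
    · exact .inl ha
    · exact .inr (Nat.cast_pos.2 hn)
  have hF (t : ℝ) (ht : t ∈ Set.Ioi 0) :
      HasSum (fun n : ℕ ↦ a n * Real.exp (-n * t)) (f (Real.exp (-t))) := by
    convert! hf _ ⟨Real.exp_pos _, Real.exp_lt_one_iff.2 (neg_lt_zero.2 ht)⟩ using 3 with n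
    rw [← Real.exp_nat_mul, neg_mul_comm]
  have h := hasSum_integral_rpow_mul (s := (k + 1 : ℕ)) hp (Nat.cast_pos.2 k.succ_pos) hF
    (by simpa only [Real.rpow_natCast, abs_div, abs_pow, Nat.abs_cast] using hsum.abs)
  have hΓ : Real.Gamma (k + 1 : ℕ) = k.factorial := by
    rw [Nat.cast_add_one, Real.Gamma_nat_eq_factorial]
  have hexponent : ((k + 1 : ℕ) : ℝ) - 1 = k := by rw [Nat.cast_add_one, add_sub_cancel_right]
  simpa only [hΓ, hexponent, Real.rpow_natCast, mul_div_assoc] using h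

end Mellin

theorem integral_example_two :
    (∫ t in Set.Ioi (0 : ℝ),
      t ^ 2 * Real.log (1 - Real.exp (-t)) / (Real.exp (-t) - 1) ^ 2) =
      2 * zetaVal 2 - 4 * zetaVal 3 - (5 / 2) * zetaVal 4 := by
  have hint := hasSum_integral_pow_mul_comp_exp_neg 2 (by simp)
    (fun x hx ↦ hasSum_neg_log_div_sq (abs_lt.2 ⟨by linarith [hx.1], hx.2⟩))
    hasSum_harmonic_coeff_div_cube.summable
  have hval := hint.unique (hasSum_harmonic_coeff_div_cube.mul_left _)
  calc
    _ = -∫ t in Set.Ioi (0 : ℝ),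
        t ^ 2 * (-Real.log (1 - Real.exp (-t)) / (1 - Real.exp (-t)) ^ 2) := by
      rw [← integral_neg]
      congr! 2 with t
      rw [sub_sq_comm]
      ring
    _ = -(2 * (2 * zetaVal 3 + zetaVal 2 ^ 2 / 2 - zetaVal 2)) := by
      rw [hval, Nat.factorial_two, Nat.cast_two]
    _ = _ := by
      rw [zetaVal_two_sq]
      ring
end

section
/- For natural numbers m and r with r ≥ 1 and m > r, the function t ↦ t^{m-1} ln(1 - e^{-t}) / (1 - e^{-t})^r is integrable on (0, ∞). -/
/-!
After the substitution `u = 1 - exp (-t)`, the factor multiplying the power of `t` is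
`log u / u ^ p`. It is `o(u ^ (-b))` at `0⁺` for every `b > p`, because `log u` grows more slowly
than any negative power, and it is `O(1 - u)` at `u = 1`. Since `u` is equivalent to `t` at `0⁺` and
`1 - u = exp (-t)`, the integrand is `O(t ^ (s - 1 - b))` at `0⁺`, with `b < s` if `b` is chosen
between `p` and `s`, and it decays exponentially at infinity.
-/

open MeasureTheory

open Asymptotics Filter Set Topology

open Real (exp log)

lemma one_sub_exp_neg_mem_Ioo {t : ℝ} (ht : 0 < t) : 1 - exp (-t) ∈ Ioo 0 1 :=
  ⟨sub_pos.2 (Real.exp_lt_one_iff.2 (neg_lt_zero.2 ht)), sub_lt_self 1 (Real.exp_pos _)⟩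

lemma isEquivalent_one_sub_exp_neg_nhds_zero : (fun t : ℝ => 1 - exp (-t)) ~[𝓝 0] id := by
  have hderiv : HasDerivAt (fun t : ℝ => 1 - exp (-t)) 1 0 := by
    simpa using (hasDerivAt_neg (0 : ℝ)).exp.const_sub 1
  exact (hasDerivAt_iff_isLittleO.1 hderiv).congr (fun t => by simp) fun t => sub_zero t

lemma tendsto_one_sub_exp_neg_nhdsGT_zero :
    Tendsto (fun t : ℝ => 1 - exp (-t)) (𝓝[>] 0) (𝓝[>] 0) := by
  refine tendsto_nhdsWithin_iff.2 ⟨?_, ?_⟩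
  · exact (Continuous.tendsto' (by fun_prop) 0 0 (by simp)).mono_left nhdsWithin_le_nhds
  · exact eventually_mem_nhdsWithin.mono fun t ht => (one_sub_exp_neg_mem_Ioo ht).1

lemma tendsto_one_sub_exp_neg_atTop_nhdsLT_one :
    Tendsto (fun t : ℝ => 1 - exp (-t)) atTop (𝓝[<] 1) := by
  refine tendsto_nhdsWithin_iff.2 ⟨?_, ?_⟩
  · simpa using Real.tendsto_exp_neg_atTop_nhds_zero.const_sub 1
  · exact (eventually_gt_atTop 0).mono fun t ht => (one_sub_exp_neg_mem_Ioo ht).2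

lemma isTheta_one_sub_exp_neg_rpow_nhdsGT_zero (a : ℝ) :
    (fun t : ℝ => (1 - exp (-t)) ^ a) =Θ[𝓝[>] 0] fun t => t ^ a := by
  have hnonneg : ∀ᶠ t : ℝ in 𝓝[>] 0, 0 ≤ t :=
    eventually_mem_nhdsWithin.mono fun _ ht => le_of_lt ht
  have htheta : (fun t : ℝ => 1 - exp (-t)) =Θ[𝓝[>] 0] id :=
    (isEquivalent_one_sub_exp_neg_nhds_zero.mono nhdsWithin_le_nhds).isTheta
  exact htheta.rpow (tendsto_one_sub_exp_neg_nhdsGT_zero.eventually hnonneg) hnonneg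

lemma integrableOn_rpow_mul_comp_one_sub_exp_neg {g : ℝ → ℝ} {b c s : ℝ}
    (hg : ContinuousOn g (Ioo 0 1)) (hg_zero : g =O[𝓝[>] 0] fun u => u ^ (-b))
    (hg_one : g =O[𝓝[<] 1] fun u => (1 - u) ^ c) (hc : 0 < c) (hb : b < s) :
    IntegrableOn (fun t => t ^ (s - 1) * g (1 - exp (-t))) (Ioi 0) := by
  have hcont : ContinuousOn (fun t => g (1 - exp (-t))) (Ioi 0) :=
    hg.comp (by fun_prop) fun t ht => one_sub_exp_neg_mem_Ioo ht
  have hzero : (fun t => g (1 - exp (-t))) =O[𝓝[>] 0] fun t => t ^ (-b) :=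
    (hg_zero.comp_tendsto tendsto_one_sub_exp_neg_nhdsGT_zero).trans
      (isTheta_one_sub_exp_neg_rpow_nhdsGT_zero (-b)).isBigO
  have hexp : (fun t => g (1 - exp (-t))) =O[atTop] fun t => exp (-c * t) := by
    refine (hg_one.comp_tendsto tendsto_one_sub_exp_neg_atTop_nhdsLT_one).congr_right fun t => ?_
    rw [Function.comp_apply, sub_sub_cancel, ← Real.exp_mul, neg_mul_comm, mul_comm]
  exact mellin_convergent_of_isBigO_scalar (hcont.locallyIntegrableOn measurableSet_Ioi)
    (hexp.trans (isLittleO_exp_neg_mul_rpow_atTop hc _).isBigO) (lt_add_one s) hzero hb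

lemma continuousOn_log_div_rpow (p : ℝ) : ContinuousOn (fun u => log u / u ^ p) (Ioi 0) :=
  fun u hu => ((Real.continuousAt_log (ne_of_gt hu)).div
    (Real.continuousAt_rpow_const u p (.inl (ne_of_gt hu)))
    (Real.rpow_pos_of_pos hu p).ne').continuousWithinAt

lemma isLittleO_log_div_rpow_nhdsGT_zero {p b : ℝ} (hpb : p < b) :
    (fun u => log u / u ^ p) =o[𝓝[>] 0] fun u => u ^ (-b) := by
  have hlog := (isLittleO_log_rpow_nhdsGT_zero (sub_neg.2 hpb)).mul_isBigO
    (isBigO_refl (fun u : ℝ => u ^ (-p)) (𝓝[>] 0))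
  refine hlog.congr' ?_ ?_ <;> filter_upwards [self_mem_nhdsWithin] with u hu
  · rw [Real.rpow_neg (le_of_lt hu), div_eq_mul_inv]
  · rw [← Real.rpow_add hu]
    ring_nf

lemma isBigO_log_div_rpow_nhds_one (p : ℝ) :
    (fun u => log u / u ^ p) =O[𝓝 1] fun u => 1 - u := by
  have hdiff : DifferentiableAt ℝ (fun u => log u / u ^ p) 1 :=
    (Real.differentiableAt_log one_ne_zero).div
      (Real.differentiableAt_rpow_const_of_ne p one_ne_zero) (by simp)
  simpa using hdiff.isBigO_sub.trans (isBigO_refl (fun u : ℝ => u - 1) _).neg_right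

theorem integrand_integrableOn_general {s p : ℝ} (hps : p < s) :
    IntegrableOn (fun t : ℝ => t ^ (s - 1) * log (1 - exp (-t)) / (1 - exp (-t)) ^ p) (Ioi 0) := by
  obtain ⟨b, hpb, hbs⟩ := exists_between hps
  have hone : (fun u => log u / u ^ p) =O[𝓝[<] 1] fun u => (1 - u) ^ (1 : ℝ) := by
    simpa only [Real.rpow_one] using (isBigO_log_div_rpow_nhds_one p).mono nhdsWithin_le_nhds
  simpa only [mul_div_assoc] using integrableOn_rpow_mul_comp_one_sub_exp_neg
    ((continuousOn_log_div_rpow p).mono Ioo_subset_Ioi_self)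
    (isLittleO_log_div_rpow_nhdsGT_zero hpb).isBigO hone one_pos hbs

theorem integrand_integrableOn (m r : ℕ) (hr : 1 ≤ r) (hm : r < m) :
    IntegrableOn
      (fun t : ℝ => t ^ (m - 1) * Real.log (1 - Real.exp (-t)) / (1 - Real.exp (-t)) ^ r)
      (Set.Ioi 0) := by
  simpa only [← Nat.cast_pred (Nat.zero_lt_of_lt hm), Real.rpow_natCast]
    using integrand_integrableOn_general (Nat.cast_lt.2 hm)
end
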